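/- arXiv:1609.07531 — 4 statements merged into one kernel-verified Lean document; each statement's English description precedes it below -/
import Mathlib

section
/- Consider the hospitals/residents instance G = (R∪H, E) with residents R = {r, r'}, hospitals H = {h, h'}, capacities cap(r) = cap(r') = cap(h) = 1 and cap(h') = 2, edge set E = R×H, and preferences r: h ≻ h'; r': h ≻ h'; h: r ≻ r'; h': r ≻ r'. Then M = {(r,h), (r',h')} and M' = {(r,h'), (r',h)} are both popular matchings of maximum size among popular matchings of G, the hospital h' is not matched to full capacity in either, M(h') ≠ M'(h'), and M' is not pairwise-stable (the edge (r,h) blocks M'). Hence the rural hospitals theorem fails for maximum-size popular matchings. -/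
/-!
Both matchings assign exactly one partner to each of the four vertices. As each side has two
vertices, comparing such a matching with any other matching `T` involves at most one pair of
partners at every vertex, so the minimum over permutations in `deltaSet` collapses to a single
vote (`deltaSet_of_card_one`). Hence `Delta` equals the computable sum `voteTotal`
(`Delta_eq_voteTotal`), and popularity is a finite check over all matchings `T`. No matching has
more than two edges since residents have capacity one, which gives maximality of the size. In
`M'` both `r` and `h` prefer each other to their partners, so `(r,h)` blocks `M'`.
-/

/-!
Many-to-many matchings with two-sided preferences, votes, and popularity,
following "Popular Matchings in the Many-to-Many Setting".
-/

/-- The vote of a vertex with rank function `r` (smaller rank = more preferred)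
comparing two options, where `none` stands for `null` (ranked below everything). -/
def vote {β : Type*} [DecidableEq β] (r : β → ℕ) : Option β → Option β → ℤ
  | none, none => 0
  | some _, none => 1
  | none, some _ => -1
  | some x, some y => if x = y then 0 else if r x < r y then 1 else -1

/-- The common length `k` of the arrays compared in `δ_u(S₀,S₁)`:
after padding the smaller of `S₀, S₁` with nulls and removing common elements. -/
def kOf {β : Type*} [DecidableEq β] (S₀ S₁ : Finset β) : ℕ :=
  max S₀.card S₁.card - (S₀ ∩ S₁).card

/-- `S₀ ∖ S₁`, viewed as an array of `Option`s padded with `none` (null) to length `k`. -/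
noncomputable def padded {β : Type*} [DecidableEq β] (S₀ S₁ : Finset β) (k : ℕ) : List (Option β) :=
  ((S₀ \ S₁).toList.map some) ++ List.replicate (k - (S₀ \ S₁).card) none

/-- `δ_u(S₀,S₁)`: the minimum, over all permutations `σ` of `{1,…,k}`, of
`Σ_i vote_u(S'₀[i], S'₁[σ(i)])`. -/
noncomputable def deltaSet {β : Type*} [DecidableEq β] (r : β → ℕ) (S₀ S₁ : Finset β) : ℤ :=
  Finset.univ.inf' ⟨1, Finset.mem_univ 1⟩ fun σ : Equiv.Perm (Fin (kOf S₀ S₁)) =>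
    ∑ i : Fin (kOf S₀ S₁),
      vote r ((padded S₀ S₁ (kOf S₀ S₁)).getD (i : ℕ) none)
             ((padded S₁ S₀ (kOf S₀ S₁)).getD (σ i : ℕ) none)

/-- A bipartite instance `G = (A ∪ B, E)` with capacities `≥ 1` and strict
preferences of every vertex over its neighbors (given by injective-on-neighbors
rank functions; smaller rank = more preferred). -/
structure PrefInstance (α β : Type*) [Fintype α] [Fintype β] [DecidableEq α] [DecidableEq β] where
  E : Finset (α × β)
  capA : α → ℕ
  capB : β → ℕ
  rankA : α → β → ℕ
  rankB : β → α → ℕ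
  capA_pos : ∀ a, 1 ≤ capA a
  capB_pos : ∀ b, 1 ≤ capB b
  rankA_injOn : ∀ a, Set.InjOn (rankA a) {b | (a, b) ∈ E}
  rankB_injOn : ∀ b, Set.InjOn (rankB b) {a | (a, b) ∈ E}

namespace PrefInstance

variable {α β : Type*} [Fintype α] [Fintype β] [DecidableEq α] [DecidableEq β]

/-- `M(a)`: the set of `B`-vertices matched to `a` in `M`. -/
def rowSet (M : Finset (α × β)) (a : α) : Finset β :=
  Finset.univ.filter fun b => (a, b) ∈ M

/-- `M(b)`: the set of `A`-vertices matched to `b` in `M`. -/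
def colSet (M : Finset (α × β)) (b : β) : Finset α :=
  Finset.univ.filter fun a => (a, b) ∈ M

variable (I : PrefInstance α β)

/-- `M` is a matching in `G`: a subset of `E` respecting all capacities. -/
def IsMatching (M : Finset (α × β)) : Prop :=
  M ⊆ I.E ∧ (∀ a, (rowSet M a).card ≤ I.capA a) ∧ (∀ b, (colSet M b).card ≤ I.capB b)

/-- `Δ_a(M₀,M₁) = δ_a(M₀(a), M₁(a))` for `a ∈ A`. -/
noncomputable def DeltaA (M₀ M₁ : Finset (α × β)) (a : α) : ℤ :=
  deltaSet (I.rankA a) (rowSet M₀ a) (rowSet M₁ a)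

/-- `Δ_b(M₀,M₁) = δ_b(M₀(b), M₁(b))` for `b ∈ B`. -/
noncomputable def DeltaB (M₀ M₁ : Finset (α × β)) (b : β) : ℤ :=
  deltaSet (I.rankB b) (colSet M₀ b) (colSet M₁ b)

/-- `Δ(M₀,M₁) = Σ_{u ∈ A∪B} Δ_u(M₀,M₁)`. -/
noncomputable def Delta (M₀ M₁ : Finset (α × β)) : ℤ :=
  (∑ a, I.DeltaA M₀ M₁ a) + ∑ b, I.DeltaB M₀ M₁ b

/-- `M` is a popular matching: `Δ(M,T) ≥ 0` against every matching `T`. -/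
def Popular (M : Finset (α × β)) : Prop :=
  I.IsMatching M ∧ ∀ T, I.IsMatching T → 0 ≤ I.Delta M T

/-- `M` is a weakly popular matching: `Δ(T,M) ≤ 0` for every matching `T`. -/
def WeaklyPopular (M : Finset (α × β)) : Prop :=
  I.IsMatching M ∧ ∀ T, I.IsMatching T → I.Delta T M ≤ 0

/-- The edge `(a,b) ∈ E ∖ M` blocks `M`. -/
def Blocks (M : Finset (α × β)) (a : α) (b : β) : Prop :=
  (a, b) ∈ I.E ∧ (a, b) ∉ M ∧
  ((rowSet M a).card < I.capA a ∨ ∃ b' ∈ rowSet M a, I.rankA a b < I.rankA a b') ∧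
  ((colSet M b).card < I.capB b ∨ ∃ a' ∈ colSet M b, I.rankB b a < I.rankB b a')

/-- `M` is a pairwise-stable matching: no edge blocks it. -/
def Stable (M : Finset (α × β)) : Prop :=
  I.IsMatching M ∧ ∀ a b, ¬ I.Blocks M a b

end PrefInstance
/-- The hospitals/residents instance with residents `R = {r, r'} = Fin 2`
(`r ↦ 0`, `r' ↦ 1`), hospitals `H = {h, h'} = Fin 2` (`h ↦ 0`, `h' ↦ 1`),
capacities `cap(r) = cap(r') = cap(h) = 1`, `cap(h') = 2`, all pairs acceptable,
and preferences `r : h ≻ h'`, `r' : h ≻ h'`, `h : r ≻ r'`, `h' : r ≻ r'`. -/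
def ruralInstance : PrefInstance (Fin 2) (Fin 2) where
  E := Finset.univ
  capA := fun _ => 1
  capB := fun b => if b = 0 then 1 else 2
  rankA := fun _ b => b.val
  rankB := fun _ a => a.val
  capA_pos := fun _ => le_refl 1
  capB_pos := by decide
  rankA_injOn := fun _ => fun x _ y _ h => Fin.val_injective h
  rankB_injOn := fun _ => fun x _ y _ h => Fin.val_injective h

/-! ### Evaluating `deltaSet` when at most one pair is compared -/

/-- When the common length is at most one, there is only one permutation, and `deltaSet` is a
single vote between the (at most one) private element of each side. -/
theorem deltaSet_eq_vote {β : Type*} [DecidableEq β] (r : β → ℕ) (S₀ S₁ : Finset β)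
    (o₀ o₁ : Option β) (hk : kOf S₀ S₁ ≤ 1)
    (h₀ : S₀ \ S₁ = o₀.toFinset) (h₁ : S₁ \ S₀ = o₁.toFinset) :
    deltaSet r S₀ S₁ = vote r o₀ o₁ := by
  have e₀ := Finset.card_sdiff_add_card_inter S₀ S₁
  have e₁ := Finset.card_sdiff_add_card_inter S₁ S₀
  rw [Finset.inter_comm] at e₁
  have hb₀ : (S₀ \ S₁).card ≤ kOf S₀ S₁ := by unfold kOf; omega
  have hb₁ : (S₁ \ S₀).card ≤ kOf S₀ S₁ := by unfold kOf; omega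
  unfold deltaSet padded
  generalize_proofs hne
  generalize kOf S₀ S₁ = k at *
  rw [h₀] at hb₀ ⊢
  rw [h₁] at hb₁ ⊢
  interval_cases k
  · cases o₀ <;> cases o₁ <;> simp_all [vote]
  · cases o₀ <;> cases o₁ <;> simp [vote]

/-- The least element of a set of vertices in `Fin 2`, or null if the set is empty. -/
def pick (D : Finset (Fin 2)) : Option (Fin 2) :=
  if 0 ∈ D then some 0 else if 1 ∈ D then some 1 else none

/-- On a two-element side, a set of size one is compared with any other set by a single vote:
a disjoint set has size at most one, and a set of size two contains it. -/
theorem deltaSet_of_card_one (r : Fin 2 → ℕ) (S₀ S₁ : Finset (Fin 2)) (h : S₀.card = 1) :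
    deltaSet r S₀ S₁ = vote r (pick (S₀ \ S₁)) (pick (S₁ \ S₀)) := by
  have key : ∀ S₀ S₁ : Finset (Fin 2), S₀.card = 1 → kOf S₀ S₁ ≤ 1 ∧
      S₀ \ S₁ = (pick (S₀ \ S₁)).toFinset ∧ S₁ \ S₀ = (pick (S₁ \ S₀)).toFinset := by
    decide
  obtain ⟨hk, h₀, h₁⟩ := key S₀ S₁ h
  exact deltaSet_eq_vote r S₀ S₁ _ _ hk h₀ h₁

/-! ### Matchings of the instance -/

/-- A computable form of `Delta ruralInstance M T`, valid when `M` matches every vertex exactly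
once. -/
def voteTotal (M T : Finset (Fin 2 × Fin 2)) : ℤ :=
  (∑ a : Fin 2, vote (fun b : Fin 2 => b.val)
    (pick (PrefInstance.rowSet M a \ PrefInstance.rowSet T a))
    (pick (PrefInstance.rowSet T a \ PrefInstance.rowSet M a))) +
  ∑ b : Fin 2, vote (fun a : Fin 2 => a.val)
    (pick (PrefInstance.colSet M b \ PrefInstance.colSet T b))
    (pick (PrefInstance.colSet T b \ PrefInstance.colSet M b))

theorem Delta_eq_voteTotal (M T : Finset (Fin 2 × Fin 2))
    (hr : ∀ a, (PrefInstance.rowSet M a).card = 1)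
    (hc : ∀ b, (PrefInstance.colSet M b).card = 1) :
    ruralInstance.Delta M T = voteTotal M T := by
  unfold PrefInstance.Delta voteTotal PrefInstance.DeltaA PrefInstance.DeltaB
  congr 1
  · exact Finset.sum_congr rfl fun a _ => deltaSet_of_card_one _ _ _ (hr a)
  · exact Finset.sum_congr rfl fun b _ => deltaSet_of_card_one _ _ _ (hc b)

instance (M : Finset (Fin 2 × Fin 2)) : Decidable (ruralInstance.IsMatching M) := by
  unfold PrefInstance.IsMatching
  infer_instance

/-- Every resident has capacity one, so a matching has at most two edges. -/
theorem card_le_two_of_isMatching :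
    ∀ P : Finset (Fin 2 × Fin 2), ruralInstance.IsMatching P → P.card ≤ 2 := by
  decide

/-- Popularity of a matching that matches every vertex exactly once, from a check of
`voteTotal` against all matchings. -/
theorem popular_of_voteTotal (M : Finset (Fin 2 × Fin 2)) (hM : ruralInstance.IsMatching M)
    (hr : ∀ a, (PrefInstance.rowSet M a).card = 1)
    (hc : ∀ b, (PrefInstance.colSet M b).card = 1)
    (h : ∀ T, ruralInstance.IsMatching T → 0 ≤ voteTotal M T) : ruralInstance.Popular M :=
  ⟨hM, fun T hT => by rw [Delta_eq_voteTotal M T hr hc]; exact h T hT⟩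

theorem blocks_swapped : ruralInstance.Blocks {(0, 1), (1, 0)} 0 0 := by
  unfold PrefInstance.Blocks
  decide

/-- In the instance above, `M = {(r,h), (r',h')}` and
`M' = {(r,h'), (r',h)}` are both popular matchings of maximum size among popular
matchings, `h'` is not matched to full capacity in either, `M(h') ≠ M'(h')`, and `M'`
is not pairwise-stable (the edge `(r,h)` blocks `M'`). Hence the rural hospitals
theorem fails for maximum-size popular matchings. -/
theorem statement13 :
    ruralInstance.Popular {(0, 0), (1, 1)} ∧
    ruralInstance.Popular {(0, 1), (1, 0)} ∧
    (∀ P : Finset (Fin 2 × Fin 2), ruralInstance.Popular P →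
      P.card ≤ Finset.card ({(0, 0), (1, 1)} : Finset (Fin 2 × Fin 2))) ∧
    (∀ P : Finset (Fin 2 × Fin 2), ruralInstance.Popular P →
      P.card ≤ Finset.card ({(0, 1), (1, 0)} : Finset (Fin 2 × Fin 2))) ∧
    (PrefInstance.colSet ({(0, 0), (1, 1)} : Finset (Fin 2 × Fin 2)) 1).card <
      ruralInstance.capB 1 ∧
    (PrefInstance.colSet ({(0, 1), (1, 0)} : Finset (Fin 2 × Fin 2)) 1).card <
      ruralInstance.capB 1 ∧
    PrefInstance.colSet ({(0, 0), (1, 1)} : Finset (Fin 2 × Fin 2)) 1 ≠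
      PrefInstance.colSet ({(0, 1), (1, 0)} : Finset (Fin 2 × Fin 2)) 1 ∧
    ruralInstance.Blocks {(0, 1), (1, 0)} 0 0 ∧
    ¬ ruralInstance.Stable {(0, 1), (1, 0)} := by
  refine ⟨popular_of_voteTotal _ (by decide) (by decide) (by decide) (by decide),
    popular_of_voteTotal _ (by decide) (by decide) (by decide) (by decide),
    fun P hP => card_le_two_of_isMatching P hP.1, fun P hP => card_le_two_of_isMatching P hP.1,
    by decide, by decide, by decide, blocks_swapped, fun hS => hS.2 0 0 blocks_swapped⟩
end

section
/- Let S be a pairwise-stable matching in G. Then for every matching T in G with |T| < |S| we have Δ(S,T) > 0; consequently no matching smaller than S is weakly popular, and S is both a minimum-size popular matching and a minimum-size weakly popular matching in G. -/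
/-! ### Votes of a single vertex -/

section DeltaSet

variable {β : Type*} [DecidableEq β]

lemma kOf_comm (S T : Finset β) : kOf S T = kOf T S := by
  unfold kOf
  rw [max_comm, Finset.inter_comm]

lemma kOf_sub_card (S T : Finset β) :
    ((kOf S T - (T \ S).card : ℕ) : ℤ) = max (S.card : ℤ) T.card - T.card := by
  have h1 := Finset.card_sdiff_add_card_inter T S
  have h2 := Finset.card_le_card (Finset.inter_subset_left (s₁ := S) (s₂ := T))
  rw [Finset.inter_comm] at h1
  unfold kOf
  omega

lemma card_sdiff_le_kOf (S T : Finset β) : (T \ S).card ≤ kOf S T := by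
  have h1 := Finset.card_sdiff_add_card_inter T S
  rw [Finset.inter_comm] at h1
  unfold kOf
  omega

lemma length_padded (S T : Finset β) : (padded T S (kOf S T)).length = kOf S T := by
  have := card_sdiff_le_kOf S T
  simp [padded]
  omega

/-- Entries of the padded array, including the default value past its end, are null or come from
`S ∖ T`. -/
lemma mem_of_getD_padded {S T : Finset β} {k i : ℕ} {x : β}
    (h : (padded S T k).getD i none = some x) : x ∈ S \ T := by
  have hmem : some x ∈ padded S T k := by
    rw [List.getD_eq_getElem?_getD] at h
    rcases hi : (padded S T k)[i]? with _ | y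
    · simp [hi] at h
    · rw [hi] at h
      exact List.mem_of_getElem? (hi.trans (congrArg some h))
  simpa [padded] using hmem

/-- The larger of the two sets needs no padding. -/
lemma getD_padded_ne_none {S T : Finset β} (h : T.card ≤ S.card) {i : ℕ} (hi : i < kOf S T) :
    (padded S T (kOf S T)).getD i none ≠ none := by
  have h1 := kOf_sub_card T S
  rw [kOf_comm] at h1
  have h2 : kOf S T - (S \ T).card = 0 := by omega
  have h3 : i < (S \ T).toList.length := by
    rw [Finset.length_toList]
    omega
  simp only [padded, h2, List.replicate_zero, List.append_nil]
  rw [List.getD_eq_getElem _ _ (by simpa using h3)]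
  simp

lemma neg_one_le_vote (r : β → ℕ) (x y : Option β) : -1 ≤ vote r x y := by
  rcases x with _ | x <;> rcases y with _ | y <;> simp only [vote] <;> (try split_ifs) <;> norm_num

/-- Lower bound on `δ(S,T)` from guaranteed votes `w t` on the elements `t ∈ T ∖ S`: a guarantee is
either the trivial `-1`, or `+1` when every element of `S` beats `t` and nulls cannot be assigned to
`t`. The parenthesized term counts the comparisons of an element of `S` with null. -/
lemma le_deltaSet (r : β → ℕ) (S T : Finset β) (w : β → ℤ)
    (hw : ∀ t ∈ T \ S, w t = -1 ∨ (w t = 1 ∧ T.card ≤ S.card ∧ ∀ s ∈ S, r s < r t)) :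
    ∑ t ∈ T \ S, w t + (max (S.card : ℤ) T.card - T.card) ≤ deltaSet r S T := by
  unfold deltaSet
  refine Finset.le_inf' _ _ fun σ _ => ?_
  set P := padded S T (kOf S T) with hP
  set Q := padded T S (kOf S T) with hQ
  let f : Option β → ℤ := fun o => o.elim 1 w
  have hlen : Q.length = kOf S T := length_padded S T
  have hsum : ∑ j : Fin (kOf S T), f (Q.getD j none)
      = ∑ t ∈ T \ S, w t + (max (S.card : ℤ) T.card - T.card) := by
    have h1 : ∑ j : Fin (kOf S T), f (Q.getD j none) = (Q.map f).sum := by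
      rw [← hlen, ← Fin.sum_univ_fun_getElem]
      refine Finset.sum_congr rfl fun j _ => ?_
      rw [List.getD_eq_getElem _ _ j.2]
    have h2 : f ∘ some = w := rfl
    have h3 : f none = 1 := rfl
    rw [h1, ← kOf_sub_card, hQ, padded]
    simp [h2, h3]
  rw [← hsum, ← Equiv.sum_comp σ]
  refine Finset.sum_le_sum fun i _ => ?_
  rcases hp : P.getD i none with _ | s <;> rcases hq : Q.getD (σ i) none with _ | t
  · exfalso
    rcases le_total T.card S.card with h | h
    · exact getD_padded_ne_none h i.2 hp
    · have hi : ((σ i : Fin (kOf S T)) : ℕ) < kOf T S := kOf_comm S T ▸ (σ i).2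
      refine getD_padded_ne_none h hi ?_
      rw [kOf_comm T S]
      exact hq
  · rcases hw t (mem_of_getD_padded hq) with h | ⟨-, h, -⟩
    · simp [f, vote, h]
    · exact absurd hp (getD_padded_ne_none h i.2)
  · simp [f, vote]
  · have hs := Finset.mem_sdiff.1 (mem_of_getD_padded hp)
    rcases hw t (mem_of_getD_padded hq) with h | ⟨h, -, h'⟩
    · simpa [f, h] using neg_one_le_vote r (some s) (some t)
    · have hlt := h' s hs.1
      have hne : s ≠ t := by
        rintro rfl
        exact lt_irrefl _ hlt
      simp [f, vote, h, hne, hlt]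

/-- The identity assignment bounds the minimum; summing over `Finset.range` allows rewriting with
`kOf_comm`. -/
lemma deltaSet_le_sum_range (r : β → ℕ) (S T : Finset β) :
    deltaSet r S T ≤ ∑ i ∈ Finset.range (kOf S T),
      vote r ((padded S T (kOf S T)).getD i none) ((padded T S (kOf S T)).getD i none) := by
  rw [Finset.sum_range]
  exact Finset.inf'_le _ (Finset.mem_univ (1 : Equiv.Perm (Fin (kOf S T))))

lemma deltaSet_add_swap_nonpos (r : β → ℕ) (S T : Finset β)
    (hr : ∀ s ∈ S, ∀ t ∈ T, r s = r t → s = t) :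
    deltaSet r T S + deltaSet r S T ≤ 0 := by
  refine (add_le_add (deltaSet_le_sum_range r T S) (deltaSet_le_sum_range r S T)).trans ?_
  rw [kOf_comm T S, ← Finset.sum_add_distrib]
  refine Finset.sum_nonpos fun i _ => ?_
  rcases hp : (padded S T (kOf S T)).getD i none with _ | s <;>
    rcases hq : (padded T S (kOf S T)).getD i none with _ | t
  · simp [vote]
  · simp [vote]
  · simp [vote]
  · have hs := (Finset.mem_sdiff.1 (mem_of_getD_padded hp)).1
    have ht := (Finset.mem_sdiff.1 (mem_of_getD_padded hq)).1
    have := hr s hs t ht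
    simp only [vote]
    grind

end DeltaSet

/-! ### Summing the votes over all vertices -/

namespace PrefInstance

variable {α β : Type*} [Fintype α] [Fintype β] [DecidableEq α] [DecidableEq β]

lemma sum_rowSet_sdiff (S T : Finset (α × β)) (f : α → β → ℤ) :
    ∑ a, ∑ b ∈ rowSet T a \ rowSet S a, f a b = ∑ e ∈ T \ S, f e.1 e.2 := by
  rw [Finset.sum_sigma']
  refine Finset.sum_bij' (fun x _ => (x.1, x.2)) (fun e _ => ⟨e.1, e.2⟩) ?_ ?_ ?_ ?_ ?_ <;>
    simp [rowSet]

lemma sum_colSet_sdiff (S T : Finset (α × β)) (f : α → β → ℤ) :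
    ∑ b, ∑ a ∈ colSet T b \ colSet S b, f a b = ∑ e ∈ T \ S, f e.1 e.2 := by
  rw [Finset.sum_sigma']
  refine Finset.sum_bij' (fun x _ => (x.2, x.1)) (fun e _ => ⟨e.2, e.1⟩) ?_ ?_ ?_ ?_ ?_ <;>
    simp [colSet]

lemma sum_card_rowSet (M : Finset (α × β)) : ∑ a, ((rowSet M a).card : ℤ) = M.card := by
  have h := sum_rowSet_sdiff ∅ M fun _ _ => 1
  simpa [rowSet] using h

variable (I : PrefInstance α β)

/-- `a` is saturated by `S` and prefers all its `S`-partners to `b`. -/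
def RejectsA (S : Finset (α × β)) (a : α) (b : β) : Prop :=
  (rowSet S a).card = I.capA a ∧ ∀ b' ∈ rowSet S a, I.rankA a b' < I.rankA a b

/-- `b` is saturated by `S` and prefers all its `S`-partners to `a`. -/
def RejectsB (S : Finset (α × β)) (a : α) (b : β) : Prop :=
  (colSet S b).card = I.capB b ∧ ∀ a' ∈ colSet S b, I.rankB b a' < I.rankB b a

lemma Stable.rejects {I : PrefInstance α β} {S : Finset (α × β)} (hS : I.Stable S) {a : α} {b : β}
    (hE : (a, b) ∈ I.E) (hab : (a, b) ∉ S) : I.RejectsA S a b ∨ I.RejectsB S a b := by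
  obtain ⟨⟨hsub, hA, hB⟩, hst⟩ := hS
  by_contra hcon
  rw [not_or] at hcon
  refine hst a b ⟨hE, hab, ?_, ?_⟩
  · by_contra h
    push Not at h
    refine hcon.1 ⟨le_antisymm (hA a) h.1, fun b' hb' => lt_of_le_of_ne (h.2 b' hb') fun heq => ?_⟩
    have hb'S : (a, b') ∈ S := by simpa [rowSet] using hb'
    have : b' = b := I.rankA_injOn a (hsub hb'S) hE heq
    exact hab (this ▸ hb'S)
  · by_contra h
    push Not at h
    refine hcon.2 ⟨le_antisymm (hB b) h.1, fun a' ha' => lt_of_le_of_ne (h.2 a' ha') fun heq => ?_⟩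
    have ha'S : (a', b) ∈ S := by simpa [colSet] using ha'
    have : a' = a := I.rankB_injOn b (hsub ha'S) hE heq
    exact hab (this ▸ ha'S)

open Classical in
lemma delta_bounds {S T : Finset (α × β)} (hS : I.Stable S) (hT : I.IsMatching T) :
    0 ≤ I.Delta S T ∧ (S.card : ℤ) - T.card ≤ I.Delta S T := by
  obtain ⟨hTE, hTA, hTB⟩ := hT
  let wA : α → β → ℤ := fun a b => if I.RejectsA S a b then 1 else -1
  let wB : α → β → ℤ := fun a b => if I.RejectsB S a b then 1 else -1
  have hA : ∀ a, ∑ b ∈ rowSet T a \ rowSet S a, wA a b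
      + (max ((rowSet S a).card : ℤ) (rowSet T a).card - (rowSet T a).card) ≤ I.DeltaA S T a := by
    intro a
    refine le_deltaSet _ _ _ _ fun b _ => ?_
    by_cases h : I.RejectsA S a b
    · exact Or.inr ⟨if_pos h, h.1 ▸ hTA a, h.2⟩
    · exact Or.inl (if_neg h)
  have hB : ∀ b, ∑ a ∈ colSet T b \ colSet S b, wB a b ≤ I.DeltaB S T b := by
    intro b
    have key : ∑ a ∈ colSet T b \ colSet S b, wB a b
        + (max ((colSet S b).card : ℤ) (colSet T b).card - (colSet T b).card)
        ≤ I.DeltaB S T b := by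
      refine le_deltaSet _ _ _ (fun a => wB a b) fun a _ => ?_
      by_cases h : I.RejectsB S a b
      · exact Or.inr ⟨if_pos h, h.1 ▸ hTB b, h.2⟩
      · exact Or.inl (if_neg h)
    have := le_max_right ((colSet S b).card : ℤ) (colSet T b).card
    linarith
  have hedges : 0 ≤ ∑ e ∈ T \ S, wA e.1 e.2 + ∑ e ∈ T \ S, wB e.1 e.2 := by
    rw [← Finset.sum_add_distrib]
    refine Finset.sum_nonneg fun e he => ?_
    obtain ⟨heT, heS⟩ := Finset.mem_sdiff.1 he
    have := hS.rejects (hTE heT) heS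
    simp only [wA, wB]
    split_ifs <;> simp_all
  have hsA := Finset.sum_le_sum fun a (_ : a ∈ Finset.univ) => hA a
  have hsB := Finset.sum_le_sum fun b (_ : b ∈ Finset.univ) => hB b
  rw [Finset.sum_add_distrib, sum_rowSet_sdiff] at hsA
  rw [sum_colSet_sdiff] at hsB
  have hex0 : 0 ≤ ∑ a, (max ((rowSet S a).card : ℤ) (rowSet T a).card - (rowSet T a).card) :=
    Finset.sum_nonneg fun a _ => sub_nonneg.2 (le_max_right _ _)
  have hex1 : (S.card : ℤ) - T.card
      ≤ ∑ a, (max ((rowSet S a).card : ℤ) (rowSet T a).card - (rowSet T a).card) := by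
    rw [← sum_card_rowSet S, ← sum_card_rowSet T, ← Finset.sum_sub_distrib]
    exact Finset.sum_le_sum fun a _ => sub_le_sub_right (le_max_left _ _) _
  unfold Delta
  constructor <;> linarith

lemma delta_le_neg_delta {S T : Finset (α × β)} (hS : S ⊆ I.E) (hT : T ⊆ I.E) :
    I.Delta T S ≤ -I.Delta S T := by
  have hA : ∑ a, (I.DeltaA T S a + I.DeltaA S T a) ≤ 0 :=
    Finset.sum_nonpos fun a _ => deltaSet_add_swap_nonpos _ _ _ fun s hs t ht h =>
      I.rankA_injOn a (hS (by simpa [rowSet] using hs)) (hT (by simpa [rowSet] using ht)) h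
  have hB : ∑ b, (I.DeltaB T S b + I.DeltaB S T b) ≤ 0 :=
    Finset.sum_nonpos fun b _ => deltaSet_add_swap_nonpos _ _ _ fun s hs t ht h =>
      I.rankB_injOn b (hS (by simpa [colSet] using hs)) (hT (by simpa [colSet] using ht)) h
  rw [Finset.sum_add_distrib] at hA hB
  unfold Delta
  linarith

end PrefInstance

/-- Let `S` be a pairwise-stable matching in `G`. Then `Δ(S,T) > 0`
for every matching `T` with `|T| < |S|`; consequently no matching smaller than `S` is
weakly popular, and `S` is both a minimum-size popular matching and a minimum-size
weakly popular matching in `G`. -/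
theorem statement14 {α β : Type*} [Fintype α] [Fintype β] [DecidableEq α] [DecidableEq β]
    (I : PrefInstance α β) (S : Finset (α × β)) (hS : I.Stable S) :
    (∀ T : Finset (α × β), I.IsMatching T → T.card < S.card → 0 < I.Delta S T) ∧
    I.Popular S ∧ I.WeaklyPopular S ∧
    (∀ T : Finset (α × β), I.Popular T → S.card ≤ T.card) ∧
    (∀ T : Finset (α × β), I.WeaklyPopular T → S.card ≤ T.card) := by
  have pos : ∀ T : Finset (α × β), I.IsMatching T → T.card < S.card → 0 < I.Delta S T := by
    intro T hT hlt
    have := (I.delta_bounds hS hT).2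
    omega
  refine ⟨pos, ⟨hS.1, fun T hT => (I.delta_bounds hS hT).1⟩, ⟨hS.1, fun T hT => ?_⟩,
    fun T hT => ?_, fun T hT => ?_⟩
  · have h1 := (I.delta_bounds hS hT).1
    have h2 := I.delta_le_neg_delta hS.1.1 hT.1
    omega
  · by_contra! h
    have h1 := pos T hT.1 h
    have h2 := I.delta_le_neg_delta hS.1.1 hT.1.1
    have h3 := hT.2 S hS.1
    omega
  · by_contra! h
    have h1 := pos T hT.1 h
    have h2 := hT.2 S hS.1
    omega
end

section
/- Let ≿ be any binary relation on the matchings of G with ≿_p ⊆ ≿ ⊆ ≿_wp. Then every maximal element of ≿ has size at most the maximum size of a popular matching in G, and some maximal element of ≿ attains this size; hence the size of a maximum-size maximal element of ≿ is the same for every such relation ≿ (it equals the size of a maximum-size popular matching). -/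
/-! ### Votes at a single vertex -/

/-- A vertex with rank function `r`, capacity `c` and partner set `S`, each partner `x` held at
level `l x`, rejects `y` at level `i`: it is saturated and ranks all of its partners above `y`,
where smaller levels come first and ties are broken by `r`. -/
def Rejects {β : Type*} (r l : β → ℕ) (S : Finset β) (c i : ℕ) (y : β) : Prop :=
  c ≤ S.card ∧ ∀ x ∈ S, toLex (l x, r x) < toLex (i, r y)

open Classical in
/-- The dual value charged by a vertex for acquiring `y`: high when the vertex rejects `y`
even at the best level. -/
noncomputable def pot {β : Type*} (r l : β → ℕ) (S : Finset β) (c : ℕ) (y : β) : ℤ :=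
  if Rejects r l S c 0 y then 2 else if Rejects r l S c 1 y then 0 else -2

/-- The dual value of a partner held at level `n`. -/
def lev (n : ℕ) : ℤ := if n = 0 then 1 else -1

lemma padded_length {β : Type*} [DecidableEq β] (S₀ S₁ : Finset β) :
    (padded S₀ S₁ (kOf S₀ S₁)).length = kOf S₀ S₁ := by
  have h := Finset.card_sdiff_add_card_inter S₀ S₁
  simp only [padded, kOf, List.length_append, List.length_map, Finset.length_toList,
    List.length_replicate]
  omega

lemma none_mem_padded {β : Type*} [DecidableEq β] {S₀ S₁ : Finset β}
    (h : none ∈ padded S₀ S₁ (kOf S₀ S₁)) : S₀.card < S₁.card := by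
  have h' := Finset.card_sdiff_add_card_inter S₀ S₁
  simp only [padded, kOf, List.mem_append, List.mem_map, List.mem_replicate] at h
  rcases h with ⟨x, _, hx⟩ | ⟨h, _⟩
  · cases hx
  · omega

lemma some_mem_padded {β : Type*} [DecidableEq β] {S₀ S₁ : Finset β} {k : ℕ} {x : β}
    (h : some x ∈ padded S₀ S₁ k) : x ∈ S₀ \ S₁ := by
  simpa [padded] using h

lemma sum_padded {β : Type*} [DecidableEq β] (S₀ S₁ : Finset β) (F : Option β → ℤ) :
    ∑ i : Fin (kOf S₀ S₁), F ((padded S₀ S₁ (kOf S₀ S₁)).getD (i : ℕ) none)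
      = ∑ x ∈ S₀ \ S₁, F (some x) + max 0 ((S₁.card : ℤ) - S₀.card) * F none := by
  have hlen := padded_length S₀ S₁
  have h1 : ∑ i : Fin (kOf S₀ S₁), F ((padded S₀ S₁ (kOf S₀ S₁)).getD (i : ℕ) none)
      = ((padded S₀ S₁ (kOf S₀ S₁)).map F).sum := by
    have : ∀ (L : List (Option β)) (k : ℕ), L.length = k →
        ∑ i : Fin k, F (L.getD (i : ℕ) none) = (L.map F).sum := by
      rintro L k rfl
      rw [← Fin.sum_univ_fun_getElem]
      simp
    exact this _ _ hlen
  have h := Finset.card_sdiff_add_card_inter S₀ S₁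
  have hle : (S₀ ∩ S₁).card ≤ S₁.card := Finset.card_le_card Finset.inter_subset_right
  rw [h1]
  simp only [padded, List.map_append, List.map_map, List.sum_append, List.map_replicate,
    List.sum_replicate, nsmul_eq_mul]
  congr 1
  · rw [← Finset.sum_map_toList]; rfl
  · congr 1
    simp only [kOf]
    omega

/-- Weak duality at one vertex: dual values `p` on gained partners and `q` on lost partners that
are feasible for every single vote bound `δ` from below. A missing partner has value `-1`. -/
lemma deltaSet_ge {β : Type*} [DecidableEq β] (r : β → ℕ) (S₀ S₁ : Finset β) (p q : β → ℤ)
    (h1 : ∀ x ∈ S₀ \ S₁, ∀ y ∈ S₁ \ S₀, p y - q x ≤ vote r (some x) (some y))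
    (h2 : ∀ x ∈ S₀ \ S₁, -1 ≤ q x)
    (h3 : S₀.card < S₁.card → ∀ y ∈ S₁ \ S₀, p y ≤ -2) :
    ∑ y ∈ S₁ \ S₀, p y - ∑ x ∈ S₀ \ S₁, q x + max 0 ((S₁.card : ℤ) - S₀.card)
      ≤ deltaSet r S₀ S₁ := by
  unfold deltaSet
  refine Finset.le_inf' _ _ fun σ _ => ?_
  let Q : Option β → ℤ := fun o => o.elim (-1) q
  let P : Option β → ℤ := fun o => o.elim 0 p
  have hk : kOf S₁ S₀ = kOf S₀ S₁ := by simp [kOf, max_comm, Finset.inter_comm]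
  have hQ := sum_padded S₀ S₁ Q
  have hP := sum_padded S₁ S₀ P
  rw [hk] at hP
  rw [← Equiv.sum_comp σ] at hP
  have hl0 := padded_length S₀ S₁
  have hl1 := padded_length S₁ S₀
  rw [hk] at hl1
  have key : ∀ i : Fin (kOf S₀ S₁),
      P ((padded S₁ S₀ (kOf S₀ S₁)).getD (σ i : ℕ) none)
        - Q ((padded S₀ S₁ (kOf S₀ S₁)).getD (i : ℕ) none)
      ≤ vote r ((padded S₀ S₁ (kOf S₀ S₁)).getD (i : ℕ) none)
             ((padded S₁ S₀ (kOf S₀ S₁)).getD (σ i : ℕ) none) := by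
    intro i
    have m0 : (padded S₀ S₁ (kOf S₀ S₁)).getD (i : ℕ) none ∈ padded S₀ S₁ (kOf S₀ S₁) := by
      rw [List.getD_eq_getElem _ _ (by rw [hl0]; exact i.2)]
      exact List.getElem_mem _
    have m1 : (padded S₁ S₀ (kOf S₀ S₁)).getD (σ i : ℕ) none ∈ padded S₁ S₀ (kOf S₀ S₁) := by
      rw [List.getD_eq_getElem _ _ (by rw [hl1]; exact (σ i).2)]
      exact List.getElem_mem _
    generalize (padded S₀ S₁ (kOf S₀ S₁)).getD (i : ℕ) none = x at m0 ⊢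
    generalize (padded S₁ S₀ (kOf S₀ S₁)).getD (σ i : ℕ) none = y at m1 ⊢
    rcases x with _ | x <;> rcases y with _ | y
    · have a := none_mem_padded m0
      rw [← hk] at m1
      have b := none_mem_padded m1
      omega
    · have := h3 (none_mem_padded m0) y (some_mem_padded m1)
      simp only [P, Q, vote, Option.elim]
      omega
    · have := h2 x (some_mem_padded m0)
      simp only [P, Q, vote, Option.elim]
      omega
    · exact h1 x (some_mem_padded m0) y (some_mem_padded m1)
  have := Finset.sum_le_sum fun i (_ : i ∈ Finset.univ) => key i
  rw [Finset.sum_sub_distrib, hP, hQ] at this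
  simp only [P, Q, Option.elim] at this
  linarith

lemma deltaSet_ge_pot {β : Type*} [DecidableEq β] (r l : β → ℕ) (S₀ S₁ : Finset β) (c : ℕ)
    (hc : S₁.card ≤ c) (hl : ∀ x ∈ S₀, l x ≤ 1) :
    ∑ y ∈ S₁ \ S₀, pot r l S₀ c y - ∑ x ∈ S₀ \ S₁, lev (l x)
        + max 0 ((S₁.card : ℤ) - S₀.card) ≤ deltaSet r S₀ S₁ := by
  apply deltaSet_ge
  · intro x hx y hy
    rw [Finset.mem_sdiff] at hx hy
    have hne : x ≠ y := fun h => hy.2 (h ▸ hx.1)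
    have h1 := hl x hx.1
    have hv : vote r (some x) (some y) = if r x < r y then 1 else -1 := by simp [vote, hne]
    rw [hv]
    unfold pot lev
    by_cases ha : Rejects r l S₀ c 0 y
    · have ha' := ha.2 x hx.1
      simp only [Prod.Lex.toLex_lt_toLex] at ha'
      rw [if_pos ha]
      split_ifs <;> omega
    · rw [if_neg ha]
      by_cases hb : Rejects r l S₀ c 1 y
      · have hb' := hb.2 x hx.1
        simp only [Prod.Lex.toLex_lt_toLex] at hb'
        rw [if_pos hb]
        split_ifs <;> omega
      · rw [if_neg hb]
        split_ifs <;> omega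
  · intro x _
    unfold lev; split_ifs <;> omega
  · intro h y _
    have : ∀ i, ¬ Rejects r l S₀ c i y := fun i hi => by have := hi.1; omega
    simp [pot, this]

/-! ### The best `c` elements of a finite set -/

/-- The `c` elements of `S` with the smallest keys. -/
def bestOf {β L : Type*} [LinearOrder L] (S : Finset β) (f : β → L) (c : ℕ) : Finset β :=
  S.filter fun x => (S.filter fun y => f y < f x).card < c

lemma card_bestOf_le {β L : Type*} [LinearOrder L] (S : Finset β) (f : β → L)
    (hf : Set.InjOn f S) (c : ℕ) : (bestOf S f c).card ≤ c := by
  classical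
  by_contra! h
  have hne : (bestOf S f c).Nonempty := Finset.card_pos.1 (by omega)
  obtain ⟨x, hx, hmax⟩ := Finset.exists_max_image _ f hne
  have hx' := Finset.mem_filter.1 hx
  have hsub : (bestOf S f c).erase x ⊆ S.filter fun y => f y < f x := by
    intro y hy
    rw [Finset.mem_erase] at hy
    have hyS := (Finset.mem_filter.1 hy.2).1
    exact Finset.mem_filter.2 ⟨hyS, lt_of_le_of_ne (hmax y hy.2)
      fun e => hy.1 (hf hyS hx'.1 e)⟩
  have := Finset.card_le_card hsub
  rw [Finset.card_erase_of_mem hx] at this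
  omega

lemma bestOf_full {β L : Type*} [LinearOrder L] (S : Finset β) (f : β → L)
    (c : ℕ) {x : β} (hx : x ∈ S) (hxb : x ∉ bestOf S f c) :
    c ≤ (bestOf S f c).card ∧ ∀ y ∈ bestOf S f c, f y < f x := by
  classical
  constructor
  · obtain ⟨z, hz, hmin⟩ := Finset.exists_min_image (S \ bestOf S f c) f
      ⟨x, Finset.mem_sdiff.2 ⟨hx, hxb⟩⟩
    rw [Finset.mem_sdiff] at hz
    have hsub : (S.filter fun y => f y < f z) ⊆ bestOf S f c := by
      intro y hy
      rw [Finset.mem_filter] at hy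
      by_contra hyb
      exact absurd (hmin y (Finset.mem_sdiff.2 ⟨hy.1, hyb⟩)) (not_le.2 hy.2)
    by_contra! h
    exact hz.2 (Finset.mem_filter.2 ⟨hz.1, (Finset.card_le_card hsub).trans_lt h⟩)
  · intro y hy
    by_contra! h
    refine hxb (Finset.mem_filter.2 ⟨hx, lt_of_le_of_lt (Finset.card_le_card ?_)
      (Finset.mem_filter.1 hy).2⟩)
    intro w hw
    rw [Finset.mem_filter] at hw ⊢
    exact ⟨hw.1, hw.2.trans_le h⟩

namespace PrefInstance

variable {α β : Type*} [Fintype α] [Fintype β] [DecidableEq α] [DecidableEq β]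

/-- `M`, with its edge `(a, b)` held at level `t a b ∈ {0, 1}`, is stable when each edge is doubled
into a level-`0` and a level-`1` copy: vertices of `A` prefer level `0`, vertices of `B` prefer
level `1` (whence the reflected level `1 - t a b` on their side). -/
def TwoLevelStable (I : PrefInstance α β) (M : Finset (α × β)) (t : α → β → ℕ) : Prop :=
  I.IsMatching M ∧ (∀ a b, (a, b) ∈ M → t a b ≤ 1) ∧
  ∀ a b, (a, b) ∈ I.E → (a, b) ∉ M → ∀ i ≤ 1,
    Rejects (I.rankA a) (t a) (rowSet M a) (I.capA a) i b ∨
    Rejects (I.rankB b) (fun a' => 1 - t a' b) (colSet M b) (I.capB b) (1 - i) a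

@[simp] lemma mem_rowSet {α β : Type*} [Fintype β] [DecidableEq α] [DecidableEq β]
    {M : Finset (α × β)} {a : α} {b : β} :
    b ∈ rowSet M a ↔ (a, b) ∈ M := by simp [rowSet]

@[simp] lemma mem_colSet {α β : Type*} [Fintype α] [DecidableEq α] [DecidableEq β]
    {M : Finset (α × β)} {a : α} {b : β} :
    a ∈ colSet M b ↔ (a, b) ∈ M := by simp [colSet]

/-! ### Two-level stable matchings beat every larger matching -/

lemma sum_row {γ : Type*} [AddCommMonoid γ] (X Y : Finset (α × β)) (F : α → β → γ) :
    ∑ a, ∑ b ∈ rowSet X a \ rowSet Y a, F a b = ∑ e ∈ X \ Y, F e.1 e.2 := by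
  symm
  apply Finset.sum_finset_product
  rintro ⟨a, b⟩
  simp

lemma sum_col {γ : Type*} [AddCommMonoid γ] (X Y : Finset (α × β)) (F : α → β → γ) :
    ∑ b, ∑ a ∈ colSet X b \ colSet Y b, F a b = ∑ e ∈ X \ Y, F e.1 e.2 := by
  symm
  apply Finset.sum_finset_product_right
  rintro ⟨a, b⟩
  simp

lemma sum_card_row (X : Finset (α × β)) : ∑ a, ((rowSet X a).card : ℤ) = X.card := by
  have := sum_row X ∅ (fun _ _ => (1 : ℤ))
  simpa [rowSet] using this

lemma delta_ge (I : PrefInstance α β) {M : Finset (α × β)} {t : α → β → ℕ}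
    (h : I.TwoLevelStable M t) {T : Finset (α × β)} (hT : I.IsMatching T) :
    0 ≤ I.Delta M T ∧ (T.card : ℤ) - M.card ≤ I.Delta M T := by
  obtain ⟨hM, ht, hst⟩ := h
  have hA : ∀ a, _ ≤ I.DeltaA M T a := fun a =>
    deltaSet_ge_pot (I.rankA a) (t a) (rowSet M a) (rowSet T a) (I.capA a) (hT.2.1 a)
      (fun b hb => ht a b (mem_rowSet.1 hb))
  have hB : ∀ b, _ ≤ I.DeltaB M T b := fun b =>
    deltaSet_ge_pot (I.rankB b) (fun a => 1 - t a b) (colSet M b) (colSet T b) (I.capB b)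
      (hT.2.2 b) (fun a _ => by omega)
  have hsumA := Finset.sum_le_sum fun a (_ : a ∈ Finset.univ) => hA a
  have hsumB := Finset.sum_le_sum fun b (_ : b ∈ Finset.univ) => hB b
  simp only [Finset.sum_add_distrib, Finset.sum_sub_distrib] at hsumA hsumB
  rw [sum_row T M (fun a b => pot (I.rankA a) (t a) (rowSet M a) (I.capA a) b),
    sum_row M T (fun a b => lev (t a b))] at hsumA
  rw [sum_col T M (fun a b => pot (I.rankB b) (fun a => 1 - t a b) (colSet M b) (I.capB b) a),
    sum_col M T (fun a b => lev (1 - t a b))] at hsumB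
  -- The two endpoint values of a lost edge cancel.
  have hlev : ∑ e ∈ M \ T, lev (t e.1 e.2) + ∑ e ∈ M \ T, lev (1 - t e.1 e.2) = 0 := by
    rw [← Finset.sum_add_distrib]
    refine Finset.sum_eq_zero fun e he => ?_
    have := ht e.1 e.2 (Finset.mem_sdiff.1 he).1
    unfold lev
    split_ifs <;> omega
  have hpot : 0 ≤ ∑ e ∈ T \ M, pot (I.rankA e.1) (t e.1) (rowSet M e.1) (I.capA e.1) e.2 +
      ∑ e ∈ T \ M, pot (I.rankB e.2) (fun a => 1 - t a e.2) (colSet M e.2) (I.capB e.2) e.1 := by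
    rw [← Finset.sum_add_distrib]
    refine Finset.sum_nonneg fun e he => ?_
    rw [Finset.mem_sdiff] at he
    have h0 := hst e.1 e.2 (hT.1 he.1) he.2 0 (by omega)
    have h1 := hst e.1 e.2 (hT.1 he.1) he.2 1 (by omega)
    simp only [Nat.sub_zero, Nat.sub_self] at h0 h1
    unfold pot
    split_ifs <;> first | omega | tauto
  have n1 : 0 ≤ ∑ a, max 0 (((rowSet T a).card : ℤ) - (rowSet M a).card) :=
    Finset.sum_nonneg fun _ _ => le_max_left _ _
  have n2 : 0 ≤ ∑ b, max 0 (((colSet T b).card : ℤ) - (colSet M b).card) :=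
    Finset.sum_nonneg fun _ _ => le_max_left _ _
  have n3 : (T.card : ℤ) - M.card ≤
      ∑ a, max 0 (((rowSet T a).card : ℤ) - (rowSet M a).card) := by
    rw [← sum_card_row T, ← sum_card_row M, ← Finset.sum_sub_distrib]
    exact Finset.sum_le_sum fun _ _ => le_max_right _ _
  unfold Delta
  constructor <;> linarith

/-! ### Existence of two-level stable matchings -/

/-- The neighbors to which `a` may still propose, `t a b` being the number of copies of `(a, b)`
that `b` has rejected. -/
def avail (I : PrefInstance α β) (t : α → β → ℕ) (a : α) : Finset β :=
  Finset.univ.filter fun b => (a, b) ∈ I.E ∧ t a b < 2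

/-- The current proposals: every `a` proposes the first remaining copies to its best neighbors. -/
def proposals (I : PrefInstance α β) (t : α → β → ℕ) : Finset (α × β) :=
  Finset.univ.filter fun e =>
    e.2 ∈ bestOf (I.avail t e.1) (fun b => toLex (t e.1 b, I.rankA e.1 b)) (I.capA e.1)

/-- The invariant of deferred acceptance: whenever `b` has rejected the level-`i` copy of `(a, b)`,
it has at least `capB b` proposals that it prefers to this copy. -/
def Inv (I : PrefInstance α β) (t : α → β → ℕ) : Prop :=
  (∀ a b, t a b ≤ 2) ∧ ∀ a b, (a, b) ∈ I.E → ∀ i < t a b,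
    I.capB b ≤ ((colSet (I.proposals t) b).filter fun a' =>
      toLex (1 - t a' b, I.rankB b a') < toLex (1 - i, I.rankB b a)).card

lemma rowSet_proposals (I : PrefInstance α β) (t : α → β → ℕ) (a : α) :
    rowSet (I.proposals t) a =
      bestOf (I.avail t a) (fun b => toLex (t a b, I.rankA a b)) (I.capA a) := by
  ext b; simp [proposals]

lemma mem_proposals (I : PrefInstance α β) (t : α → β → ℕ) {a : α} {b : β}
    (h : (a, b) ∈ I.proposals t) : (a, b) ∈ I.E ∧ t a b < 2 := by
  simp only [proposals, bestOf, avail, Finset.mem_filter, Finset.mem_univ, true_and] at h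
  exact h.1

/-- After a rejection, all other proposals are still made. -/
lemma proposals_mono (I : PrefInstance α β) {t tn : α → β → ℕ} (hle : ∀ a b, t a b ≤ tn a b)
    {a : α} {b : β} (heq : tn a b = t a b) (h : (a, b) ∈ I.proposals t) :
    (a, b) ∈ I.proposals tn := by
  simp only [proposals, bestOf, avail, Finset.mem_filter, Finset.mem_univ, true_and] at h ⊢
  rw [heq]
  refine ⟨h.1, lt_of_le_of_lt (Finset.card_le_card ?_) h.2⟩
  intro y hy
  simp only [Finset.mem_filter, Finset.mem_univ, true_and, Prod.Lex.toLex_lt_toLex] at hy ⊢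
  have := hle a y
  refine ⟨⟨hy.1.1, by omega⟩, by omega⟩

/-- An overfull `b` can reject its worst proposal without breaking the invariant. -/
lemma inv_step (I : PrefInstance α β) {t : α → β → ℕ} (h : I.Inv t) {b : β}
    (hb : I.capB b < (colSet (I.proposals t) b).card) :
    ∃ tn, I.Inv tn ∧ ∑ a, ∑ b, t a b < ∑ a, ∑ b, tn a b := by
  obtain ⟨a, ha, hmax⟩ := Finset.exists_max_image (colSet (I.proposals t) b)
    (fun a' => toLex (1 - t a' b, I.rankB b a')) (Finset.card_pos.1 (by omega))
  have hamem := I.mem_proposals t (mem_colSet.1 ha)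
  let tn : α → β → ℕ := fun x y => if x = a ∧ y = b then t x y + 1 else t x y
  have hle : ∀ x y, t x y ≤ tn x y := by intro x y; simp only [tn]; split_ifs <;> omega
  have hoff : ∀ x y, ¬ (x = a ∧ y = b) → tn x y = t x y := by
    intro x y hxy; simp only [tn, if_neg hxy]
  have hon : tn a b = t a b + 1 := by simp [tn]
  -- All proposals at `b` other than the rejected one survive and are strictly better than it.
  have herase : ∀ x ∈ (colSet (I.proposals t) b).erase a,
      x ∈ colSet (I.proposals tn) b ∧ tn x b = t x b ∧
      toLex (1 - t x b, I.rankB b x) < toLex (1 - t a b, I.rankB b a) := by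
    intro x hx
    rw [Finset.mem_erase] at hx
    have e := hoff x b (fun h => hx.1 h.1)
    refine ⟨mem_colSet.2 (I.proposals_mono hle e (mem_colSet.1 hx.2)), e,
      lt_of_le_of_ne (hmax x hx.2) fun he => hx.1 ?_⟩
    have he' := congrArg (fun z => (ofLex z).2) he
    exact I.rankB_injOn b (I.mem_proposals t (mem_colSet.1 hx.2)).1 hamem.1 he'
  have hcard : I.capB b ≤ ((colSet (I.proposals t) b).erase a).card := by
    rw [Finset.card_erase_of_mem ha]; omega
  refine ⟨tn, ⟨?_, ?_⟩, ?_⟩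
  · intro x y
    by_cases hxy : x = a ∧ y = b
    · rw [hxy.1, hxy.2, hon]; omega
    · rw [hoff x y hxy]; exact h.1 x y
  · intro x y hxy i hi
    -- The bound follows at `b` as soon as the rejected proposal is at least as good as `(x, i)`.
    have hworse : y = b → toLex (1 - t a b, I.rankB b a) ≤ toLex (1 - i, I.rankB b x) →
        I.capB y ≤ ((colSet (I.proposals tn) y).filter fun a' =>
          toLex (1 - tn a' y, I.rankB y a') < toLex (1 - i, I.rankB y x)).card := by
      rintro rfl hcmp
      refine hcard.trans (Finset.card_le_card fun z hz => ?_)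
      obtain ⟨h1, h2, h3⟩ := herase z hz
      rw [Finset.mem_filter, h2]
      exact ⟨h1, h3.trans_le hcmp⟩
    by_cases hnew : x = a ∧ y = b ∧ i = t a b
    · obtain ⟨rfl, rfl, rfl⟩ := hnew
      exact hworse rfl le_rfl
    · have hi' : i < t x y := by
        by_cases hc : x = a ∧ y = b
        · obtain ⟨rfl, rfl⟩ := hc
          rw [hon] at hi
          have : i ≠ t x y := fun h => hnew ⟨rfl, rfl, h⟩
          omega
        · rwa [hoff x y hc] at hi
      by_cases hcmp : y = b ∧ toLex (1 - t a b, I.rankB b a) ≤ toLex (1 - i, I.rankB b x)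
      · exact hworse hcmp.1 hcmp.2
      · refine (h.2 x y hxy i hi').trans (Finset.card_le_card fun z hz => ?_)
        rw [Finset.mem_filter] at hz ⊢
        have e : tn z y = t z y := by
          refine hoff z y fun hzy => ?_
          obtain ⟨rfl, rfl⟩ := hzy
          exact hcmp ⟨rfl, hz.2.le⟩
        rw [e]
        exact ⟨mem_colSet.2 (I.proposals_mono hle e (mem_colSet.1 hz.1)), hz.2⟩
  · refine Finset.sum_lt_sum (fun x _ => Finset.sum_le_sum fun y _ => hle x y)
      ⟨a, Finset.mem_univ _, ?_⟩
    exact Finset.sum_lt_sum (fun y _ => hle a y) ⟨b, Finset.mem_univ _, by omega⟩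

lemma exists_twoLevelStable (I : PrefInstance α β) : ∃ M t, I.TwoLevelStable M t := by
  -- A state of maximal total level satisfying the invariant admits no further rejection.
  have hbdd : ∀ t, I.Inv t → ∑ a, ∑ b, t a b ≤ ∑ _a : α, ∑ _b : β, 2 := fun t ht =>
    Finset.sum_le_sum fun a _ => Finset.sum_le_sum fun b _ => ht.1 a b
  let s : Set ℕ := {n | ∃ t, I.Inv t ∧ ∑ a, ∑ b, t a b = n}
  have hs : s.Nonempty := ⟨_, fun _ _ => 0, ⟨by simp, by simp⟩, rfl⟩
  have hsb : BddAbove s := ⟨_, by rintro n ⟨t, ht, rfl⟩; exact hbdd t ht⟩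
  obtain ⟨t, ht, hsum⟩ := Nat.sSup_mem hs hsb
  have hcol : ∀ b, (colSet (I.proposals t) b).card ≤ I.capB b := by
    intro b
    by_contra! hb
    obtain ⟨tn, ht', hlt⟩ := I.inv_step ht hb
    have := le_csSup hsb ⟨tn, ht', rfl⟩
    omega
  refine ⟨I.proposals t, t, ⟨?_, ?_, hcol⟩, ?_, ?_⟩
  · rintro ⟨a, b⟩ h
    exact (I.mem_proposals t h).1
  · intro a
    rw [rowSet_proposals]
    refine card_bestOf_le _ _ ?_ _
    intro x hx y hy hxy
    have hxy' := congrArg (fun z => (ofLex z).2) hxy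
    simp only [avail, Finset.coe_filter, Finset.mem_univ, true_and, Set.mem_ofPred_eq] at hx hy
    exact I.rankA_injOn a hx.1 hy.1 hxy'
  · intro a b h
    have := (I.mem_proposals t h).2
    omega
  · intro a b hE hM i hi
    by_cases hlt : i < t a b
    · right
      have h := ht.2 a b hE i hlt
      have hsub := Finset.filter_subset (fun a' =>
        toLex (1 - t a' b, I.rankB b a') < toLex (1 - i, I.rankB b a)) (colSet (I.proposals t) b)
      have heq := Finset.eq_of_subset_of_card_le hsub ((hcol b).trans h)
      refine ⟨h.trans (Finset.card_le_card hsub), fun x hx => ?_⟩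
      rw [← heq] at hx
      exact (Finset.mem_filter.1 hx).2
    · left
      have hav : b ∈ I.avail t a := by
        simp only [avail, Finset.mem_filter, Finset.mem_univ, true_and]
        exact ⟨hE, by omega⟩
      have hnb : b ∉ bestOf (I.avail t a) (fun b => toLex (t a b, I.rankA a b)) (I.capA a) := by
        rw [← rowSet_proposals, mem_rowSet]; exact hM
      obtain ⟨h1, h2⟩ := bestOf_full _ _ _ hav hnb
      rw [← rowSet_proposals] at h1 h2
      refine ⟨h1, fun x hx => (h2 x hx).trans_le ?_⟩
      rw [Prod.Lex.toLex_le_toLex]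
      simp only
      omega

end PrefInstance

/-- Let `≿` be any binary relation on the matchings of `G` with
`≿_p ⊆ ≿ ⊆ ≿_wp` (where `M₀ ≿_p M₁` iff `Δ(M₀,M₁) ≥ 0` and `M₀ ≿_wp M₁` iff
`Δ(M₁,M₀) ≤ 0`). Then every maximal element of `≿` has size at most the maximum size of
a popular matching, and some maximal element of `≿` attains this size; hence the size
of a maximum-size maximal element of `≿` is the same for every such relation `≿`. -/
theorem statement15 {α β : Type*} [Fintype α] [Fintype β] [DecidableEq α] [DecidableEq β]
    (I : PrefInstance α β) (r : Finset (α × β) → Finset (α × β) → Prop)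
    (hp : ∀ M₀ M₁ : Finset (α × β), I.IsMatching M₀ → I.IsMatching M₁ →
      0 ≤ I.Delta M₀ M₁ → r M₀ M₁)
    (hwp : ∀ M₀ M₁ : Finset (α × β), I.IsMatching M₀ → I.IsMatching M₁ →
      r M₀ M₁ → I.Delta M₁ M₀ ≤ 0) :
    ∃ M₀ : Finset (α × β), I.Popular M₀ ∧
      (I.IsMatching M₀ ∧ ∀ M₁, I.IsMatching M₁ → r M₁ M₀ → r M₀ M₁) ∧
      (∀ P : Finset (α × β), I.Popular P → P.card ≤ M₀.card) ∧
      (∀ M : Finset (α × β),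
        (I.IsMatching M ∧ ∀ M₁, I.IsMatching M₁ → r M₁ M → r M M₁) →
        M.card ≤ M₀.card) := by
  obtain ⟨M₀, t, h⟩ := I.exists_twoLevelStable
  have hpop : I.Popular M₀ := ⟨h.1, fun T hT => (I.delta_ge h hT).1⟩
  have hmax : ∀ P, I.Popular P →
      I.IsMatching P ∧ ∀ M₁, I.IsMatching M₁ → r M₁ P → r P M₁ :=
    fun P hP => ⟨hP.1, fun M₁ hM₁ _ => hp _ _ hP.1 hM₁ (hP.2 M₁ hM₁)⟩
  have hsize : ∀ M : Finset (α × β),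
      (I.IsMatching M ∧ ∀ M₁, I.IsMatching M₁ → r M₁ M → r M M₁) → M.card ≤ M₀.card := by
    rintro M ⟨hM, hMmax⟩
    obtain ⟨h1, h2⟩ := I.delta_ge h hM
    have h3 := hwp _ _ hM h.1 (hMmax M₀ h.1 (hp _ _ h.1 hM h1))
    omega
  exact ⟨M₀, hpop, hmax M₀ hpop, fun P hP => hsize P (hmax P hP), hsize⟩
end

section
/- Consider the one-to-one instance G' with vertices {p_1, q_1, r_1, s_1} on one side and {h_1, h_2, h'_1, h''_1} on the other (all capacities 1), edges p_1–h_1, p_1–h_2, p_1–h''_1, q_1–h_1, q_1–h_2, q_1–h'_1, r_1–h_1, r_1–h_2, s_1–h_1, s_1–h_2, and preferences p_1: h_1 ≻ h_2 ≻ h''_1; q_1: h_1 ≻ h_2 ≻ h'_1; r_1: h_1 ≻ h_2; s_1: h_1 ≻ h_2; h_1: p_1 ≻ q_1 ≻ r_1 ≻ s_1; h_2: p_1 ≻ q_1 ≻ r_1 ≻ s_1; h'_1: q_1; h''_1: p_1. Then neither N_1 = {(p_1,h_1), (q_1,h'_1), (r_1,h_2)} nor N_2 = {(p_1,h_2), (q_1,h'_1),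 (r_1,h_1)} is a popular matching in G': the matching M_1 = {(p_1,h''_1), (q_1,h_2), (r_1,h_1)} satisfies Δ(M_1,N_1) > 0 and the matching M_2 = {(p_1,h_1), (q_1,h'_1), (s_1,h_2)} satisfies Δ(M_2,N_2) > 0. -/
/-- The one-to-one instance with left vertices `{p₁, q₁, r₁, s₁} = Fin 4`
(`p₁ ↦ 0`, `q₁ ↦ 1`, `r₁ ↦ 2`, `s₁ ↦ 3`), right vertices
`{h₁, h₂, h'₁, h''₁} = Fin 4` (`h₁ ↦ 0`, `h₂ ↦ 1`, `h'₁ ↦ 2`, `h''₁ ↦ 3`), all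
capacities 1, edges `p₁–h₁, p₁–h₂, p₁–h''₁, q₁–h₁, q₁–h₂, q₁–h'₁, r₁–h₁, r₁–h₂,
s₁–h₁, s₁–h₂`, and preferences `p₁ : h₁ ≻ h₂ ≻ h''₁`, `q₁ : h₁ ≻ h₂ ≻ h'₁`,
`r₁ : h₁ ≻ h₂`, `s₁ : h₁ ≻ h₂`, `h₁ : p₁ ≻ q₁ ≻ r₁ ≻ s₁`, `h₂ : p₁ ≻ q₁ ≻ r₁ ≻ s₁`,
`h'₁ : q₁`, `h''₁ : p₁`. -/
def cloneInstance : PrefInstance (Fin 4) (Fin 4) where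
  E := {(0, 0), (0, 1), (0, 3), (1, 0), (1, 1), (1, 2), (2, 0), (2, 1), (3, 0), (3, 1)}
  capA := fun _ => 1
  capB := fun _ => 1
  rankA := fun _ b => b.val
  rankB := fun _ a => a.val
  capA_pos := fun _ => le_refl 1
  capB_pos := fun _ => le_refl 1
  rankA_injOn := fun _ => fun x _ y _ h => Fin.val_injective h
  rankB_injOn := fun _ => fun x _ y _ h => Fin.val_injective h

theorem deltaSet_of_kOf_eq_zero {β : Type*} [DecidableEq β] (r : β → ℕ) (S₀ S₁ : Finset β)
    (h : kOf S₀ S₁ = 0) : deltaSet r S₀ S₁ = 0 := by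
  -- The length is made a variable: `Fin (kOf S₀ S₁)` blocks rewriting with `h` directly.
  have key : ∀ k : ℕ, k = 0 →
      (Finset.univ.inf' ⟨1, Finset.mem_univ 1⟩ fun σ : Equiv.Perm (Fin k) =>
        ∑ i : Fin k, vote r ((padded S₀ S₁ k).getD (i : ℕ) none)
          ((padded S₁ S₀ k).getD (σ i : ℕ) none)) =
      0 := by
    rintro k rfl
    simp
  exact key _ h

theorem deltaSet_of_kOf_eq_one {β : Type*} [DecidableEq β] (r : β → ℕ) (S₀ S₁ : Finset β)
    (h : kOf S₀ S₁ = 1) :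
    deltaSet r S₀ S₁ = vote r ((padded S₀ S₁ 1).getD 0 none) ((padded S₁ S₀ 1).getD 0 none) := by
  -- The length is made a variable: `Fin (kOf S₀ S₁)` blocks rewriting with `h` directly.
  have key : ∀ k : ℕ, k = 1 →
      (Finset.univ.inf' ⟨1, Finset.mem_univ 1⟩ fun σ : Equiv.Perm (Fin k) =>
        ∑ i : Fin k, vote r ((padded S₀ S₁ k).getD (i : ℕ) none)
          ((padded S₁ S₀ k).getD (σ i : ℕ) none)) =
      vote r ((padded S₀ S₁ 1).getD 0 none) ((padded S₁ S₀ 1).getD 0 none) := by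
    rintro k rfl
    simp
  exact key _ h

/-- For sets with at most one element, encoded as options, `δ_u` is a single vote. -/
theorem deltaSet_toFinset {β : Type*} [DecidableEq β] (r : β → ℕ) (x y : Option β) :
    deltaSet r x.toFinset y.toFinset = vote r x y := by
  rcases x with _ | x <;> rcases y with _ | y
  · rw [deltaSet_of_kOf_eq_zero] <;> simp [kOf, vote]
  · rw [deltaSet_of_kOf_eq_one] <;> simp [kOf, vote, padded]
  · rw [deltaSet_of_kOf_eq_one] <;> simp [kOf, vote, padded]
  · by_cases hxy : x = y
    · subst hxy
      rw [deltaSet_of_kOf_eq_zero] <;> simp [kOf, vote]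
    · have hyx : y ≠ x := Ne.symm hxy
      have h₁ : ({x} : Finset β) \ {y} = {x} := by simp [hxy]
      have h₂ : ({y} : Finset β) \ {x} = {y} := by simp [hyx]
      rw [deltaSet_of_kOf_eq_one]
      · simp [padded, h₁, h₂]
      · simp [kOf, hxy]

/-- If `f₀, f₁` (resp. `g₀, g₁`) give the partners in `M₀, M₁` of the vertices of the first
(resp. second) side, with `none` for unmatched vertices, then `Δ(M₀,M₁)` is the sum of the votes
of all vertices between their two partners. -/
theorem Delta_eq_sum_vote {α β : Type*} [Fintype α] [Fintype β] [DecidableEq α] [DecidableEq β]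
    (I : PrefInstance α β) {M₀ M₁ : Finset (α × β)} {f₀ f₁ : α → Option β} {g₀ g₁ : β → Option α}
    (hf₀ : ∀ a, PrefInstance.rowSet M₀ a = (f₀ a).toFinset)
    (hf₁ : ∀ a, PrefInstance.rowSet M₁ a = (f₁ a).toFinset)
    (hg₀ : ∀ b, PrefInstance.colSet M₀ b = (g₀ b).toFinset)
    (hg₁ : ∀ b, PrefInstance.colSet M₁ b = (g₁ b).toFinset) :
    I.Delta M₀ M₁ =
      (∑ a, vote (I.rankA a) (f₀ a) (f₁ a)) + ∑ b, vote (I.rankB b) (g₀ b) (g₁ b) := by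
  simp only [PrefInstance.Delta, PrefInstance.DeltaA, PrefInstance.DeltaB, hf₀, hf₁, hg₀, hg₁,
    deltaSet_toFinset]

/-- A matching that loses the vote against some matching is not popular. -/
theorem not_popular_of_Delta_neg {α β : Type*} [Fintype α] [Fintype β] [DecidableEq α]
    [DecidableEq β] (I : PrefInstance α β) {M T : Finset (α × β)} (hT : I.IsMatching T)
    (h : I.Delta M T < 0) : ¬ I.Popular M :=
  fun hM => absurd (hM.2 T hT) (not_le.mpr h)

/-- In the one-to-one instance above, neither
`N₁ = {(p₁,h₁), (q₁,h'₁), (r₁,h₂)}` nor `N₂ = {(p₁,h₂), (q₁,h'₁), (r₁,h₁)}` is a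
popular matching: `M₁ = {(p₁,h''₁), (q₁,h₂), (r₁,h₁)}` satisfies `Δ(M₁,N₁) > 0` and
`M₂ = {(p₁,h₁), (q₁,h'₁), (s₁,h₂)}` satisfies `Δ(M₂,N₂) > 0`. -/
theorem statement17 :
    cloneInstance.IsMatching {(0, 0), (1, 2), (2, 1)} ∧
    cloneInstance.IsMatching {(0, 1), (1, 2), (2, 0)} ∧
    0 < cloneInstance.Delta {(0, 3), (1, 1), (2, 0)} {(0, 0), (1, 2), (2, 1)} ∧
    0 < cloneInstance.Delta {(0, 0), (1, 2), (3, 1)} {(0, 1), (1, 2), (2, 0)} ∧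
    ¬ cloneInstance.Popular {(0, 0), (1, 2), (2, 1)} ∧
    ¬ cloneInstance.Popular {(0, 1), (1, 2), (2, 0)} := by
  refine ⟨⟨by decide, by decide, by decide⟩, ⟨by decide, by decide, by decide⟩, ?_, ?_,
    not_popular_of_Delta_neg _ (T := {(0, 3), (1, 1), (2, 0)}) ⟨by decide, by decide, by decide⟩ ?_,
    not_popular_of_Delta_neg _ (T := {(0, 0), (1, 2), (3, 1)}) ⟨by decide, by decide, by decide⟩ ?_⟩
  · rw [Delta_eq_sum_vote cloneInstance
      (f₀ := ![some 3, some 1, some 0, none]) (f₁ := ![some 0, some 2, some 1, none])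
      (g₀ := ![some 2, some 1, none, some 0]) (g₁ := ![some 0, some 2, some 1, none])
      (by decide) (by decide) (by decide) (by decide)]
    decide
  · rw [Delta_eq_sum_vote cloneInstance
      (f₀ := ![some 0, some 2, none, some 1]) (f₁ := ![some 1, some 2, some 0, none])
      (g₀ := ![some 0, some 3, some 1, none]) (g₁ := ![some 2, some 0, some 1, none])
      (by decide) (by decide) (by decide) (by decide)]
    decide
  · rw [Delta_eq_sum_vote cloneInstance
      (f₀ := ![some 0, some 2, some 1, none]) (f₁ := ![some 3, some 1, some 0, none])
      (g₀ := ![some 0, some 2, some 1, none]) (g₁ := ![some 2, some 1, none, some 0])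
      (by decide) (by decide) (by decide) (by decide)]
    decide
  · rw [Delta_eq_sum_vote cloneInstance
      (f₀ := ![some 1, some 2, some 0, none]) (f₁ := ![some 0, some 2, none, some 1])
      (g₀ := ![some 2, some 0, some 1, none]) (g₁ := ![some 0, some 3, some 1, none])
      (by decide) (by decide) (by decide) (by decide)]
    decide
end
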